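/- Suppose p* ∈ I is optimal over the class of threshold stopping times (V(p*;x) ≥ V(p;x) for all p, x ∈ I) and g is twice differentiable at p*. Then the pair (H, p*) with H(x) := h(p*)ψ(x) solves the free-boundary problem: (1/2)σ(x)²H''(x) + a(x)H'(x) = ρH(x) for all x ∈ (l, p*), H(p*) = g(p*), H'(p*) = g'(p*); and moreover H''(p*) ≥ g''(p*). -/

import Mathlib

open Set

/-!
Starting below both thresholds, the comparison of `V pstar` with `V p` is exactly the comparison of
`g / ψ` at `pstar` and at `p`, so optimality makes `pstar` a maximizer of `g / ψ`. Equivalently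
`H = (g pstar / ψ pstar) * ψ` majorizes `g` on `I` and touches it at `pstar`: smooth fit and
`g'' pstar ≤ H'' pstar` are the first- and second-order conditions at a minimum of `H - g`.
The differential equation passes from `ψ` to `H` by linearity.
-/

section Contact

open Filter Topology

theorem deriv_deriv_nonneg_of_isLocalMin {f : ℝ → ℝ} {x₀ : ℝ} (hmin : IsLocalMin f x₀)
    (hcont : ContinuousAt f x₀) : 0 ≤ deriv (deriv f) x₀ := by
  by_contra! hneg
  have hmax : IsLocalMax f x₀ :=
    isLocalMax_of_deriv_deriv_neg hneg hmin.deriv_eq_zero hcont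
  have hconst : f =ᶠ[𝓝 x₀] fun _ => f x₀ := by
    filter_upwards [hmin, hmax] with x hge hle using le_antisymm hle hge
  have hzero : deriv (deriv f) x₀ = 0 := by simp [hconst.deriv.deriv_eq]
  exact hneg.ne hzero

theorem deriv_deriv_sub {𝕜 F : Type*} [NontriviallyNormedField 𝕜] [NormedAddCommGroup F]
    [NormedSpace 𝕜 F] {f k : 𝕜 → F} {x₀ : 𝕜}
    (hf : ∀ᶠ x in 𝓝 x₀, DifferentiableAt 𝕜 f x) (hf' : DifferentiableAt 𝕜 (deriv f) x₀)
    (hk : ∀ᶠ x in 𝓝 x₀, DifferentiableAt 𝕜 k x) (hk' : DifferentiableAt 𝕜 (deriv k) x₀) :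
    deriv (deriv (f - k)) x₀ = deriv (deriv f) x₀ - deriv (deriv k) x₀ := by
  have hderiv : deriv (f - k) =ᶠ[𝓝 x₀] deriv f - deriv k := by
    filter_upwards [hf, hk] with x hfx hkx using deriv_sub hfx hkx
  rw [hderiv.deriv_eq, deriv_sub hf' hk']

theorem isLocalMin_sub_of_eventuallyLE {X G : Type*} [TopologicalSpace X] [AddCommGroup G]
    [PartialOrder G] [IsOrderedAddMonoid G] {f k : X → G} {x₀ : X}
    (hle : f ≤ᶠ[𝓝 x₀] k) (heq : f x₀ = k x₀) : IsLocalMin (k - f) x₀ := by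
  filter_upwards [hle] with x hx
  simpa [heq] using hx

theorem deriv_eq_of_eventuallyLE {f k : ℝ → ℝ} {x₀ : ℝ} (hle : f ≤ᶠ[𝓝 x₀] k)
    (heq : f x₀ = k x₀) (hf : DifferentiableAt ℝ f x₀) (hk : DifferentiableAt ℝ k x₀) :
    deriv f x₀ = deriv k x₀ := by
  have hzero := (isLocalMin_sub_of_eventuallyLE hle heq).deriv_eq_zero
  rw [deriv_sub hk hf, sub_eq_zero] at hzero
  exact hzero.symm

theorem deriv_deriv_le_of_eventuallyLE {f k : ℝ → ℝ} {x₀ : ℝ} (hle : f ≤ᶠ[𝓝 x₀] k)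
    (heq : f x₀ = k x₀)
    (hf : ∀ᶠ x in 𝓝 x₀, DifferentiableAt ℝ f x) (hf' : DifferentiableAt ℝ (deriv f) x₀)
    (hk : ∀ᶠ x in 𝓝 x₀, DifferentiableAt ℝ k x) (hk' : DifferentiableAt ℝ (deriv k) x₀) :
    deriv (deriv f) x₀ ≤ deriv (deriv k) x₀ := by
  have hcont : ContinuousAt (k - f) x₀ :=
    hk.self_of_nhds.continuousAt.sub hf.self_of_nhds.continuousAt
  have hnonneg := deriv_deriv_nonneg_of_isLocalMin (isLocalMin_sub_of_eventuallyLE hle heq) hcont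
  rwa [deriv_deriv_sub hk hk' hf hf', sub_nonneg] at hnonneg

end Contact

section Generator

/-- The infinitesimal generator `u ↦ σ² u'' / 2 + a u'` of the diffusion `dX = a(X) dt + σ(X) dW`,
as a pointwise differential expression (meaningful where `u` is twice differentiable). -/
noncomputable def diffusionGenerator (a σ u : ℝ → ℝ) (x : ℝ) : ℝ :=
  (1 / 2) * σ x ^ 2 * deriv (deriv u) x + a x * deriv u x

theorem diffusionGenerator_const_mul (a σ u : ℝ → ℝ) (c x : ℝ) :
    diffusionGenerator a σ (fun y => c * u y) x = c * diffusionGenerator a σ u x := by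
  simp only [diffusionGenerator, deriv_const_mul_field']
  ring

end Generator

section Threshold

variable {α : Type*} [LinearOrder α]

/-- The value `V(p; x)` of stopping at the first entry into `[p, ∞)` when started from `x`. -/
noncomputable def thresholdValue (g ψ : α → ℝ) (p x : α) : ℝ :=
  if x < p then g p / ψ p * ψ x else g x

/-- Optimality of the threshold `q` among all thresholds in `I`, simultaneously for every starting
point in `I`. Membership of `q` in `I` is not part of the definition. -/
def IsOptimalThreshold (g ψ : α → ℝ) (I : Set α) (q : α) : Prop :=
  ∀ p ∈ I, ∀ x ∈ I, thresholdValue g ψ p x ≤ thresholdValue g ψ q x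

variable {g ψ : α → ℝ} {I : Set α} {q : α}

theorem IsOptimalThreshold.isMaxOn_div (hopt : IsOptimalThreshold g ψ I q) (hq : q ∈ I)
    (hI : ∀ p ∈ I, ∃ x ∈ I, x < p) (hψ : ∀ x ∈ I, 0 < ψ x) :
    IsMaxOn (fun p => g p / ψ p) I q := by
  intro p hp
  obtain ⟨x, hx, hxmin⟩ := hI (min p q) (min_rec' (· ∈ I) hp hq)
  obtain ⟨hxp, hxq⟩ := lt_min_iff.mp hxmin
  have hvalue := hopt p hp x hx
  rw [thresholdValue, thresholdValue, if_pos hxp, if_pos hxq] at hvalue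
  exact le_of_mul_le_mul_right hvalue (hψ x hx)

theorem IsOptimalThreshold.le_div_mul (hopt : IsOptimalThreshold g ψ I q) (hq : q ∈ I)
    (hI : ∀ p ∈ I, ∃ x ∈ I, x < p) (hψ : ∀ x ∈ I, 0 < ψ x) {x : α} (hx : x ∈ I) :
    g x ≤ g q / ψ q * ψ x :=
  (div_le_iff₀ (hψ x hx)).mp (hopt.isMaxOn_div hq hI hψ hx)

end Threshold

theorem stmt_6_general {I : Set ℝ} (hI : IsOpen I) {a σ g ψ : ℝ → ℝ} {ρ q : ℝ}
    (hψpos : ∀ x ∈ I, 0 < ψ x) (hψ : ∀ x ∈ I, DifferentiableAt ℝ ψ x)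
    (hψ' : ∀ x ∈ I, DifferentiableAt ℝ (deriv ψ) x)
    (hode : ∀ x ∈ I, diffusionGenerator a σ ψ x = ρ * ψ x)
    (hq : q ∈ I) (hopt : IsOptimalThreshold g ψ I q)
    (hg : ∀ᶠ x in nhds q, DifferentiableAt ℝ g x) (hg' : DifferentiableAt ℝ (deriv g) q)
    {H : ℝ → ℝ} (hH : ∀ x, H x = g q / ψ q * ψ x) :
    (∀ x ∈ I, diffusionGenerator a σ H x = ρ * H x) ∧
    H q = g q ∧ deriv H q = deriv g q ∧ deriv (deriv g) q ≤ deriv (deriv H) q := by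
  obtain rfl : H = fun x => g q / ψ q * ψ x := funext hH
  have hnhds : ∀ᶠ x in nhds q, x ∈ I := hI.mem_nhds hq
  have hnomin : ∀ p ∈ I, ∃ x ∈ I, x < p := fun p hp =>
    let ⟨x, hxp, hx⟩ := (hI.eventually_mem hp).exists_lt
    ⟨x, hx, hxp⟩
  have hmajor : g ≤ᶠ[nhds q] fun x => g q / ψ q * ψ x :=
    hnhds.mono fun x hx => hopt.le_div_mul hq hnomin hψpos hx
  have hcontact : g q / ψ q * ψ q = g q := div_mul_cancel₀ _ (hψpos q hq).ne'
  have hHdiff : ∀ x ∈ I, DifferentiableAt ℝ (fun x => g q / ψ q * ψ x) x :=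
    fun x hx => (hψ x hx).const_mul _
  have hHdiff' : DifferentiableAt ℝ (deriv fun x => g q / ψ q * ψ x) q := by
    simpa only [deriv_const_mul_field'] using (hψ' q hq).const_mul (g q / ψ q)
  refine ⟨fun x hx => ?_, hcontact, ?_, ?_⟩
  · rw [diffusionGenerator_const_mul, hode x hx, mul_left_comm]
  · exact (deriv_eq_of_eventuallyLE hmajor hcontact.symm hg.self_of_nhds (hHdiff q hq)).symm
  · exact deriv_deriv_le_of_eventuallyLE hmajor hcontact.symm hg hg' (hnhds.mono hHdiff) hHdiff'

/-- Proposition 1: if the threshold `pstar` is optimal over threshold stopping times and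
`g` is twice differentiable at `pstar`, then `(H, pstar)` with `H = h(pstar)·ψ` solves the
free-boundary problem, and moreover `H''(pstar) ≥ g''(pstar)`. -/
theorem stmt_6 (I : Set ℝ) (hIopen : IsOpen I) (hIconn : I.OrdConnected)
    (hIne : I.Nonempty)
    (a σ : ℝ → ℝ) (ρ : ℝ) (hρ : 0 < ρ)
    (ha : ContinuousOn a I) (hσ : ContinuousOn σ I) (hσpos : ∀ x ∈ I, 0 < σ x)
    (g ψ : ℝ → ℝ) (hψpos : ∀ x ∈ I, 0 < ψ x) (hψmono : StrictMonoOn ψ I)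
    (hψd : ∀ x ∈ I, DifferentiableAt ℝ ψ x)
    (hψd2 : ∀ x ∈ I, DifferentiableAt ℝ (deriv ψ) x)
    (hODE : ∀ x ∈ I, (1/2) * σ x ^ 2 * deriv (deriv ψ) x + a x * deriv ψ x = ρ * ψ x)
    (V : ℝ → ℝ → ℝ)
    (hV : ∀ p ∈ I, ∀ x ∈ I, V p x = if x < p then (g p / ψ p) * ψ x else g x)
    (pstar : ℝ) (hpstar : pstar ∈ I)
    (hopt : ∀ p ∈ I, ∀ x ∈ I, V p x ≤ V pstar x)
    (hg1 : ∀ᶠ x in nhds pstar, DifferentiableAt ℝ g x)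
    (hg2 : DifferentiableAt ℝ (deriv g) pstar)
    (H : ℝ → ℝ) (hH : ∀ x, H x = (g pstar / ψ pstar) * ψ x) :
    (∀ x ∈ I, x < pstar →
        (1/2) * σ x ^ 2 * deriv (deriv H) x + a x * deriv H x = ρ * H x) ∧
    H pstar = g pstar ∧
    deriv H pstar = deriv g pstar ∧
    deriv (deriv g) pstar ≤ deriv (deriv H) pstar := by
  have hoptimal : IsOptimalThreshold g ψ I pstar := fun p hp x hx => by
    simpa only [thresholdValue, hV p hp x hx, hV pstar hpstar x hx] using hopt p hp x hx
  obtain ⟨hode, hfit⟩ :=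
    stmt_6_general hIopen hψpos hψd hψd2 hODE hpstar hoptimal hg1 hg2 hH
  exact ⟨fun x hx _ => hode x hx, hfit⟩
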